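/- arXiv:2405.16723 — 3 statements merged into one kernel-verified Lean document; each statement's English description precedes it below -/
import Mathlib

section
/- Let p be a prime, ε ∈ {1, −1}, and r ≥ 0 an integer. If p² − ε·p + 1 = 3^r, then ε = 1, p = 2, and r = 1. -/
/-!
Since `ε ^ 2 = 1`, the left side is `x ^ 2 - x + 1` at `x = ε * p`. Four times this value is
`(2 * x - 1) ^ 2 + 3`, and a number of the form `y ^ 2 + 3` is never divisible by `9`. Hence
`r ≤ 1`, and the two remaining quadratic equations in `x` factor over the integers.
-/

theorem not_sq_dvd_sq_add_of_prime {R : Type*} [CommRing R] [IsDomain R] {q : R} (hq : Prime q)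
    (y : R) : ¬ q ^ 2 ∣ y ^ 2 + q := by
  intro h
  have hy : q ∣ y :=
    hq.dvd_of_dvd_pow ((dvd_add_left dvd_rfl).1 ((dvd_pow_self q two_ne_zero).trans h))
  have hqq : q ^ 2 ∣ q ^ 1 := by
    simpa only [pow_one] using (dvd_add_right (pow_dvd_pow_of_dvd hy 2)).1 h
  exact absurd ((pow_dvd_pow_iff hq.ne_zero hq.not_isUnit).1 hqq) (by decide)

theorem not_nine_dvd_sq_sub_self_add_one (x : ℤ) : ¬ 9 ∣ x ^ 2 - x + 1 := by
  intro h
  have hsq : 4 * (x ^ 2 - x + 1) = (2 * x - 1) ^ 2 + 3 := by ring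
  exact not_sq_dvd_sq_add_of_prime Int.prime_three (2 * x - 1) (hsq ▸ h.mul_left 4)

theorem sq_sub_self_add_one_eq_three_pow_iff {x : ℤ} {r : ℕ} :
    x ^ 2 - x + 1 = 3 ^ r ↔ r = 0 ∧ (x = 0 ∨ x = 1) ∨ r = 1 ∧ (x = -1 ∨ x = 2) := by
  constructor
  · intro h
    have hr : r < 2 := by
      by_contra! hr
      exact not_nine_dvd_sq_sub_self_add_one x (h ▸ pow_dvd_pow 3 hr)
    interval_cases r
    · have hfactor : x * (x - 1) = 0 := by linear_combination h
      exact .inl ⟨rfl, (mul_eq_zero.1 hfactor).imp_right sub_eq_zero.1⟩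
    · have hfactor : (x + 1) * (x - 2) = 0 := by linear_combination h
      exact .inr ⟨rfl, (mul_eq_zero.1 hfactor).imp eq_neg_of_add_eq_zero_left sub_eq_zero.1⟩
  · rintro (⟨rfl, rfl | rfl⟩ | ⟨rfl, rfl | rfl⟩) <;> norm_num

theorem stmt2_general (p : ℤ) (hp : 2 ≤ p) (ε : ℤ) (hε : ε = 1 ∨ ε = -1) (r : ℕ)
    (h : p ^ 2 - ε * p + 1 = 3 ^ r) :
    ε = 1 ∧ p = 2 ∧ r = 1 := by
  have hεsq : ε ^ 2 = 1 := sq_eq_one_iff.2 hε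
  have hx : (ε * p) ^ 2 - ε * p + 1 = 3 ^ r := by linear_combination h + p ^ 2 * hεsq
  have hcases := sq_sub_self_add_one_eq_three_pow_iff.1 hx
  rcases hε with rfl | rfl <;> lia

theorem stmt2 (p : ℕ) (hp : Nat.Prime p) (ε : ℤ) (hε : ε = 1 ∨ ε = -1) (r : ℕ)
    (h : (p : ℤ) ^ 2 - ε * p + 1 = 3 ^ r) :
    ε = 1 ∧ p = 2 ∧ r = 1 := by
  exact_mod_cast stmt2_general p (by exact_mod_cast hp.two_le) ε hε r h
end

section
/- Let ℓ and p be odd primes, let ε ∈ {1, −1}, let d ≥ 3 be an odd integer, and let j ≥ 0 be an integer. If 2·ℓ^j = p^d + ε, then p = 3 and ε = −1. -/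
/-!
Put `a = -ε * p`, so that `a ^ d - 1 = -ε * (p ^ d + ε)` for odd `d` and both signs are covered by
the equation `|a ^ d - 1| = 2 * ℓ ^ j`. Factor `a ^ d - 1 = S * (a - 1)` with
`S = 1 + a + ⋯ + a ^ (d - 1)`. As `a` is odd, `|a - 1| = 2 * ℓ ^ i` and `|S| = ℓ ^ v`. If `i = 0`,
then `a = 3` because `a ≠ -1`. If `i ≥ 1`, then `ℓ ∣ a - 1`, and by lifting the exponent `S` and
`d` have the same `ℓ`-adic valuation; hence `ℓ ^ v ∣ d`, contradicting `d < |S|`.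
-/

open Finset

theorem emultiplicity_geom_sum₂ {ℓ : ℕ} (hℓ : ℓ.Prime) (hodd : Odd ℓ) {x y : ℤ}
    (hxy : (ℓ : ℤ) ∣ x - y) (hx : ¬(ℓ : ℤ) ∣ x) (n : ℕ) :
    emultiplicity (ℓ : ℤ) (∑ i ∈ range n, x ^ i * y ^ (n - 1 - i)) = emultiplicity ℓ n := by
  have hℓ' : Prime (ℓ : ℤ) := Nat.prime_iff_prime_int.1 hℓ
  rcases eq_or_ne x y with rfl | hne
  · have hpow : emultiplicity (ℓ : ℤ) (x ^ (n - 1)) = 0 :=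
      emultiplicity_eq_zero.2 fun h ↦ hx (hℓ'.dvd_of_dvd_pow h)
    rw [geom_sum₂_self, emultiplicity_mul hℓ', hpow, add_zero, Int.natCast_emultiplicity]
  · have hfin : FiniteMultiplicity (ℓ : ℤ) (x - y) :=
      FiniteMultiplicity.of_prime_left hℓ' (sub_ne_zero.2 hne)
    have hlift := Int.emultiplicity_pow_sub_pow hℓ hodd hxy hx n
    rw [← geom_sum₂_mul, emultiplicity_mul hℓ', add_comm] at hlift
    exact ENat.add_right_injective_of_ne_top
      (finiteMultiplicity_iff_emultiplicity_ne_top.1 hfin) hlift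

theorem lt_abs_geom_sum {a : ℤ} (ha : 3 ≤ |a|) {n : ℕ} (hn : 3 ≤ n) :
    (n : ℤ) < |∑ i ∈ range n, a ^ i| := by
  induction n, hn using Nat.le_induction with
  | base =>
    refine lt_of_lt_of_le ?_ (le_abs_self _)
    simp only [sum_range_succ, range_zero, sum_empty]
    rcases le_abs'.1 ha with h | h <;> push_cast <;> nlinarith
  | succ n hn ih =>
    set S := ∑ i ∈ range n, a ^ i
    rw [geom_sum_succ]
    calc ((n + 1 : ℕ) : ℤ) < 3 * n - 1 := by lia
      _ ≤ |a| * |S| - 1 := by gcongr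
      _ = |a * S| - |(-1 : ℤ)| := by rw [abs_mul, abs_neg, abs_one]
      _ ≤ |a * S - -1| := abs_sub_abs_le_abs_sub _ _
      _ = |a * S + 1| := by rw [sub_neg_eq_add]

theorem natAbs_geom_sum_ne_prime_pow {ℓ : ℕ} (hℓ : ℓ.Prime) (hodd : Odd ℓ) {a : ℤ}
    (ha : 3 ≤ |a|) (hdvd : (ℓ : ℤ) ∣ a - 1) {n : ℕ} (hn : 3 ≤ n) (v : ℕ) :
    (∑ i ∈ range n, a ^ i).natAbs ≠ ℓ ^ v := by
  intro hS
  have hndvd : ¬(ℓ : ℤ) ∣ a := fun h ↦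
    (Nat.prime_iff_prime_int.1 hℓ).not_dvd_one ((dvd_sub_right h).1 hdvd)
  have hval : emultiplicity (ℓ : ℤ) (∑ i ∈ range n, a ^ i) = emultiplicity ℓ n := by
    simpa only [one_pow, mul_one] using emultiplicity_geom_sum₂ hℓ hodd hdvd hndvd n
  have hpow : ℓ ^ v ∣ n := by
    rw [pow_dvd_iff_le_emultiplicity, ← hval, ← pow_dvd_iff_le_emultiplicity]
    exact_mod_cast Int.natCast_dvd.2 hS.symm.dvd
  have hle : ℓ ^ v ≤ n := Nat.le_of_dvd (by lia) hpow
  have hlt : n < (∑ i ∈ range n, a ^ i).natAbs := by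
    simpa only [Int.abs_eq_natAbs, Nat.cast_lt] using lt_abs_geom_sum ha hn
  exact (hlt.trans_eq hS).not_ge hle

theorem stmt3_general {ℓ : ℕ} (hℓ : ℓ.Prime) (hodd : Odd ℓ) {a : ℤ} (ha : 1 < |a|) {d : ℕ}
    (hd : 3 ≤ d) {j : ℕ} (h : |a ^ d - 1| = 2 * (ℓ : ℤ) ^ j) : a = 3 := by
  have hodd_a : Odd a := by
    have heven : Even (a ^ d - 1) := even_abs.1 (h ▸ even_two_mul _)
    have hodd_pow : Odd (a ^ d) := by simpa only [sub_add_cancel] using heven.add_one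
    exact (Int.odd_pow.1 hodd_pow).resolve_right (by lia)
  obtain ⟨b, rfl⟩ := hodd_a
  set S := ∑ i ∈ range d, (2 * b + 1) ^ i
  have hmul : S.natAbs * b.natAbs = ℓ ^ j := by
    have hfactor : S * (2 * b) = (2 * b + 1) ^ d - 1 := by
      rw [← geom_sum_mul, add_sub_cancel_right]
    rw [← hfactor, abs_mul, abs_mul, abs_two] at h
    zify
    linarith
  obtain ⟨v, -, hv⟩ := (Nat.dvd_prime_pow hℓ).1 (Dvd.intro _ hmul)
  obtain ⟨i, -, hi⟩ := (Nat.dvd_prime_pow hℓ).1 (Dvd.intro_left _ hmul)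
  rw [Int.abs_eq_natAbs] at ha
  rcases Nat.eq_zero_or_pos i with rfl | hpos
  · lia
  · have hdvd : (ℓ : ℤ) ∣ 2 * b + 1 - 1 := by
      rw [add_sub_cancel_right]
      exact (Int.natCast_dvd.2 (hi ▸ dvd_pow_self ℓ hpos.ne')).mul_left 2
    have ha3 : 3 ≤ |2 * b + 1| := by
      rw [Int.abs_eq_natAbs]
      lia
    exact absurd hv (natAbs_geom_sum_ne_prime_pow hℓ hodd ha3 hdvd hd v)

theorem stmt3 (ℓ p : ℕ) (hℓ : Nat.Prime ℓ) (hℓodd : Odd ℓ) (hp : Nat.Prime p) (hpodd : Odd p)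
    (ε : ℤ) (hε : ε = 1 ∨ ε = -1) (d : ℕ) (hd : 3 ≤ d) (hdodd : Odd d) (j : ℕ)
    (h : 2 * (ℓ : ℤ) ^ j = (p : ℤ) ^ d + ε) :
    p = 3 ∧ ε = -1 := by
  have hp1 := hp.one_lt
  have habs : |(-ε * p) ^ d - 1| = 2 * (ℓ : ℤ) ^ j := by
    rw [← abs_of_nonneg (by positivity : 0 ≤ 2 * (ℓ : ℤ) ^ j), h, abs_eq_abs]
    rcases hε with rfl | rfl
    · right; rw [neg_one_mul, hdodd.neg_pow]; ring
    · left; ring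
  have ha : -ε * p = 3 := by
    refine stmt3_general hℓ hℓodd ?_ hd habs
    rcases hε with rfl | rfl <;> simpa using hp1
  rcases hε with rfl | rfl <;> lia
end

section
/- Let ℓ and p be odd primes, let ε ∈ {1, −1}, let d ≥ 3 be an odd integer, and let j ≥ 0 be an integer. If 8·ℓ^j = p^d + ε, then p = 7 and ε = 1. -/
/-!
If `d = 2 * e` is even, then `ε = -1` by reduction modulo `4`, and `x = p ^ e` satisfies
`x ^ 2 - 1 = 8 * ℓ ^ j`. The consecutive integers `(|x| - 1) / 2` and `(|x| + 1) / 2` are coprime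
with product `2 * ℓ ^ j`, so `|x|` is `3` or `5`, which is not a proper power.

If `d` is odd, then `p ^ d + ε = p ^ d + ε ^ d` is divisible by `p + ε`, and `p ^ d ≡ p` modulo `8`,
so `p + ε = 8 * ℓ ^ a` with cofactor `ℓ ^ b`. If `a > 0`, lifting the exponent gives `ℓ ^ b ∣ d`,
hence `p ^ d + ε ≤ (p + ε) * d`, which is false for `p, d ≥ 3`. So `p + ε = 8`, and the case
`p = 9`, `ε = -1` is excluded by reading `9 ^ d` as the even power `3 ^ (2 * d)`.
-/

section LiftingTheExponent

variable {ℓ n : ℕ} {x y : ℤ}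

lemma emultiplicity_pow_add_pow_of_prime_of_odd (hℓ : ℓ.Prime) (hn : Odd n)
    (hxy : (ℓ : ℤ) ∣ x + y) (hx : ¬ (ℓ : ℤ) ∣ x) :
    emultiplicity (ℓ : ℤ) (x ^ n + y ^ n) = emultiplicity (ℓ : ℤ) (x + y) + emultiplicity ℓ n := by
  rcases hℓ.eq_two_or_odd' with rfl | hℓodd
  · have hn2 : ¬ 2 ∣ n := hn.not_two_dvd_nat
    have hsub : emultiplicity ((2 : ℕ) : ℤ) (x ^ n - (-y) ^ n) =
        emultiplicity ((2 : ℕ) : ℤ) (x - -y) :=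
      emultiplicity_pow_sub_pow_of_prime (Nat.prime_iff_prime_int.mp hℓ)
        (by rwa [sub_neg_eq_add]) hx (by exact_mod_cast hn2)
    rw [emultiplicity_eq_zero.mpr hn2, add_zero]
    simpa only [hn.neg_pow, sub_neg_eq_add] using hsub
  · exact Int.emultiplicity_pow_add_pow hℓ hℓodd hxy hx hn

lemma prime_pow_dvd_of_pow_add_pow_eq {b : ℕ} (hℓ : ℓ.Prime) (hn : Odd n)
    (hxy : (ℓ : ℤ) ∣ x + y) (hx : ¬ (ℓ : ℤ) ∣ x) (hne : x + y ≠ 0)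
    (h : x ^ n + y ^ n = (x + y) * (ℓ : ℤ) ^ b) : ℓ ^ b ∣ n := by
  have hℓ' : Prime (ℓ : ℤ) := Nat.prime_iff_prime_int.mp hℓ
  have hfin : FiniteMultiplicity (ℓ : ℤ) (x + y) := .of_prime_left hℓ' hne
  have hlte := emultiplicity_pow_add_pow_of_prime_of_odd hℓ hn hxy hx
  rw [h, emultiplicity_mul hℓ', emultiplicity_pow_self_of_prime hℓ'] at hlte
  have hb : (b : ℕ∞) = emultiplicity ℓ n :=
    ENat.add_right_injective_of_ne_top (finiteMultiplicity_iff_emultiplicity_ne_top.mp hfin) hlte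
  exact pow_dvd_of_le_emultiplicity hb.le

end LiftingTheExponent

lemma add_one_mul_add_one_lt_pow {R : Type*} [CommRing R] [LinearOrder R] [IsStrictOrderedRing R]
    {x : R} (hx : 3 ≤ x) {n : ℕ} (hn : 3 ≤ n) : (x + 1) * n + 1 < x ^ n := by
  induction n, hn using Nat.le_induction with
  | base => push_cast; nlinarith [mul_nonneg (sub_nonneg.mpr hx) (sq_nonneg x)]
  | succ n hn ih =>
    have hn' : (3 : R) ≤ n := by exact_mod_cast hn
    calc (x + 1) * (n + 1 : ℕ) + 1 ≤ ((x + 1) * n + 1) * 3 := by push_cast; nlinarith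
      _ < x ^ n * 3 := by linarith
      _ ≤ x ^ n * x := by gcongr
      _ = x ^ (n + 1) := (pow_succ x n).symm

lemma pow_modEq_self_of_odd {x : ℤ} {n : ℕ} (hx : Odd x) (hn : Odd n) : x ^ n ≡ x [ZMOD 8] := by
  obtain ⟨k, rfl⟩ := hn
  have hsq : x ^ 2 ≡ 1 [ZMOD 8] :=
    (Int.modEq_iff_dvd.mpr (Int.eight_dvd_sq_sub_one_of_odd hx)).symm
  simpa only [pow_succ _ (2 * k), pow_mul, one_pow, one_mul] using (hsq.pow k).mul_right x

lemma not_four_dvd_sq_add_one (x : ℤ) : ¬ 4 ∣ x ^ 2 + 1 := by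
  rcases Int.even_or_odd x with ⟨k, rfl⟩ | hx
  · have : (k + k) ^ 2 = 4 * k ^ 2 := by ring
    omega
  · have := Int.sq_mod_four_eq_one_of_odd hx
    omega

section EvenExponent

variable {ℓ j : ℕ}

lemma eq_one_or_two_of_mul_succ_eq (hℓ : ℓ.Prime) {k : ℕ} (h : k * (k + 1) = 2 * ℓ ^ j) :
    k = 1 ∨ k = 2 := by
  have hpos : 0 < ℓ ^ j := pow_pos hℓ.pos j
  have hk : k ≠ 0 := by rintro rfl; omega
  have hdvd : ℓ ^ j ∣ k ∨ ℓ ^ j ∣ k + 1 := by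
    rcases eq_or_ne j 0 with rfl | hj
    · simp
    · exact ((Nat.coprime_self_add_right.mpr (Nat.coprime_one_right k)).isPrimePow_dvd_mul
        (hℓ.isPrimePow.pow hj)).mp ⟨2, by rw [h, mul_comm]⟩
  rcases hdvd with ⟨m, hm⟩ | ⟨m, hm⟩
  · have hmk : m * (k + 1) = 2 := by
      apply Nat.eq_of_mul_eq_mul_left hpos
      rw [← mul_assoc, ← hm, h, mul_comm]
    have := Nat.le_of_dvd two_pos ⟨m, by rw [← hmk, mul_comm]⟩
    omega
  · have hkm : k * m = 2 := by
      apply Nat.eq_of_mul_eq_mul_left hpos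
      rw [mul_left_comm, ← hm, h, mul_comm]
    have := Nat.le_of_dvd two_pos ⟨m, hkm.symm⟩
    omega

lemma natAbs_eq_three_or_five_of_sq_sub_one_eq (hℓ : ℓ.Prime) {x : ℤ}
    (h : x ^ 2 - 1 = 8 * (ℓ : ℤ) ^ j) : x.natAbs = 3 ∨ x.natAbs = 5 := by
  have hnat : x.natAbs ^ 2 = 8 * ℓ ^ j + 1 := by
    zify
    rw [sq_abs]
    linarith
  have hodd : Odd (x.natAbs ^ 2) := ⟨4 * ℓ ^ j, by rw [hnat]; ring⟩
  obtain ⟨k, hk⟩ := (Nat.odd_mul.mp (sq x.natAbs ▸ hodd)).1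
  have hprod : k * (k + 1) = 2 * ℓ ^ j := by
    rw [hk] at hnat
    linarith
  have := eq_one_or_two_of_mul_succ_eq hℓ hprod
  omega

lemma pow_two_mul_sub_one_ne (hℓ : ℓ.Prime) (x : ℤ) {e : ℕ} (he : e ≠ 1) :
    x ^ (2 * e) - 1 ≠ 8 * (ℓ : ℤ) ^ j := by
  intro h
  rw [mul_comm, pow_mul] at h
  have hprime : (x.natAbs ^ e).Prime := by
    rw [← Int.natAbs_pow]
    rcases natAbs_eq_three_or_five_of_sq_sub_one_eq hℓ h with h | h <;> rw [h] <;> norm_num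
  exact he (Nat.Prime.eq_one_of_pow hprime)

end EvenExponent

section OddExponent

variable {ℓ d j : ℕ}

lemma odd_of_even_pow_add {x y : ℤ} (hy : Odd y) (hd : d ≠ 0) (h : Even (x ^ d + y)) : Odd x :=
  (Int.odd_pow.mp ((Int.even_add'.mp h).mpr hy)).resolve_right hd

lemma three_le_of_two_lt_pow_add {x y : ℤ} (hx : Odd x) (hy : y ≤ 1) (hd : Odd d)
    (h : 2 < x ^ d + y) : 3 ≤ x := by
  have hpos : 0 < x := hd.pow_pos_iff.mp (by omega)
  have hne : x ≠ 1 := by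
    rintro rfl
    rw [one_pow] at h
    omega
  obtain ⟨k, hk⟩ := hx
  omega

lemma exists_add_eq_eight_mul_prime_pow {x y : ℤ} (hℓ : ℓ.Prime) (hx : Odd x) (hy : Odd y)
    (hd : Odd d) (hpos : 0 < x + y) (h : x ^ d + y ^ d = 8 * (ℓ : ℤ) ^ j) :
    ∃ a b : ℕ, x + y = 8 * (ℓ : ℤ) ^ a ∧ x ^ d + y ^ d = (x + y) * (ℓ : ℤ) ^ b := by
  have hmod : x ^ d + y ^ d ≡ x + y [ZMOD 8] :=
    (pow_modEq_self_of_odd hx hd).add (pow_modEq_self_of_odd hy hd)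
  obtain ⟨m, hm⟩ : 8 ∣ x + y := hmod.dvd_iff.mp ⟨_, h⟩
  have hdvd : 8 * m ∣ 8 * (ℓ : ℤ) ^ j := hm ▸ h ▸ hd.add_dvd_pow_add_pow x y
  lift m to ℕ using by omega
  obtain ⟨a, haj, rfl⟩ : ∃ a ≤ j, m = ℓ ^ a :=
    (Nat.dvd_prime_pow hℓ).mp (by exact_mod_cast (mul_dvd_mul_iff_left (by norm_num)).mp hdvd)
  refine ⟨a, j - a, by exact_mod_cast hm, ?_⟩
  rw [h, hm, Nat.cast_pow, mul_assoc, pow_mul_pow_sub _ haj]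

lemma not_prime_dvd_add_of_pow_add_pow_eq {x y : ℤ} {b : ℕ} (hℓ : ℓ.Prime) (hx : 3 ≤ x)
    (hy : IsUnit y) (hd3 : 3 ≤ d) (hd : Odd d) (h : x ^ d + y ^ d = (x + y) * (ℓ : ℤ) ^ b) :
    ¬ (ℓ : ℤ) ∣ x + y := by
  intro hℓadd
  have hℓx : ¬ (ℓ : ℤ) ∣ x := fun hℓx ↦
    (Nat.prime_iff_prime_int.mp hℓ).not_isUnit
      (isUnit_of_dvd_unit ((dvd_add_right hℓx).mp hℓadd) hy)
  have hy1 : y = 1 ∨ y = -1 := Int.isUnit_iff.mp hy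
  have hyd : y ^ d = 1 ∨ y ^ d = -1 := Int.isUnit_iff.mp (hy.pow d)
  have hle : (ℓ : ℤ) ^ b ≤ d := by
    exact_mod_cast Nat.le_of_dvd hd.pos
      (prime_pow_dvd_of_pow_add_pow_eq hℓ hd hℓadd hℓx (by omega) h)
  have hlt : x ^ d + y ^ d < x ^ d + y ^ d :=
    calc x ^ d + y ^ d = (x + y) * (ℓ : ℤ) ^ b := h
      _ ≤ (x + y) * d := mul_le_mul_of_nonneg_left hle (by omega)
      _ ≤ (x + 1) * d := by gcongr; omega
      _ < x ^ d - 1 := lt_sub_iff_add_lt.mpr (add_one_mul_add_one_lt_pow hx hd3)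
      _ ≤ x ^ d + y ^ d := by omega
  exact hlt.false

lemma add_eq_eight_of_odd {p ε : ℤ} (hℓ : ℓ.Prime) (hε : ε = 1 ∨ ε = -1) (hd3 : 3 ≤ d)
    (hd : Odd d) (h : 8 * (ℓ : ℤ) ^ j = p ^ d + ε) : p + ε = 8 := by
  have hεodd : Odd ε := by rcases hε with rfl | rfl <;> decide
  have hεd : ε ^ d = ε := by rcases hε with rfl | rfl <;> simp [hd.neg_one_pow]
  have hℓj : 0 < (ℓ : ℤ) ^ j := pow_pos (by exact_mod_cast hℓ.pos) j
  have hp : Odd p := odd_of_even_pow_add hεodd hd.pos.ne' ⟨4 * (ℓ : ℤ) ^ j, by rw [← h]; ring⟩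
  have hgt : 2 < p ^ d + ε := by omega
  have hp3 : 3 ≤ p := three_le_of_two_lt_pow_add hp (by omega) hd hgt
  obtain ⟨a, b, ha, hb⟩ :=
    exists_add_eq_eight_mul_prime_pow hℓ hp hεodd hd (by omega) (by rw [hεd, h])
  have ha0 : a = 0 := by
    by_contra ha0
    exact not_prime_dvd_add_of_pow_add_pow_eq hℓ hp3 (Int.isUnit_iff.mpr hε) hd3 hd hb
      (ha ▸ (dvd_pow_self _ ha0).mul_left 8)
  simpa only [ha0, pow_zero, mul_one] using ha

end OddExponent

theorem stmt4_general (ℓ : ℕ) (p : ℤ) (hℓ : Nat.Prime ℓ) (ε : ℤ) (hε : ε = 1 ∨ ε = -1)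
    (d : ℕ) (hd : 3 ≤ d) (j : ℕ) (h : 8 * (ℓ : ℤ) ^ j = p ^ d + ε) : p = 7 ∧ ε = 1 := by
  rcases d.even_or_odd' with ⟨e, rfl | rfl⟩
  · rcases hε with rfl | rfl
    · refine absurd ?_ (not_four_dvd_sq_add_one (p ^ e))
      exact ⟨2 * (ℓ : ℤ) ^ j, by rw [← pow_mul, mul_comm e, ← h]; ring⟩
    · exact absurd h.symm (pow_two_mul_sub_one_ne hℓ p (by omega))
  · have hadd : p + ε = 8 := add_eq_eight_of_odd hℓ hε hd (odd_two_mul_add_one e) h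
    rcases hε with rfl | rfl
    · exact ⟨by omega, rfl⟩
    · obtain rfl : p = 3 ^ 2 := by omega
      rw [← pow_mul] at h
      exact absurd h.symm (pow_two_mul_sub_one_ne hℓ 3 (by omega))

theorem stmt4 (ℓ p : ℕ) (hℓ : Nat.Prime ℓ) (hℓodd : Odd ℓ) (hp : Nat.Prime p) (hpodd : Odd p)
    (ε : ℤ) (hε : ε = 1 ∨ ε = -1) (d : ℕ) (hd : 3 ≤ d) (hdodd : Odd d) (j : ℕ)
    (h : 8 * (ℓ : ℤ) ^ j = (p : ℤ) ^ d + ε) :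
    p = 7 ∧ ε = 1 := by
  exact_mod_cast stmt4_general ℓ p hℓ ε hε d hd j h
end
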